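/- For every positive integer n, every crossover probability α ∈ [0,1/2], and every Boolean function b : {0,1}^n → {0,1}, the noisy SMSE satisfies M(Y^n | b(X^n)) ≥ (n − 2 ln 2 · (1 − 2α)^2)/4. -/

import Mathlib

/-!
Write `m` for the total mass of a nonnegative weight `f` on `{0,1}^n` and let `klU f` be its
unnormalized relative entropy (in nats) with respect to the uniform weight of the same mass.
Three facts combine.

* Pinsker's inequality at each step of the chain rule: `m n / 4 - smse f ≤ klU f / 2`
  (`smse_ge`), because `Q (1 - Q) = 1/4 - (1 - 2 Q)^2 / 4`.
* The strong data processing inequality for the binary symmetric channel,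
  `klU (T f) ≤ (1 - 2 α)^2 klU f` (`klU_noise_le`).
* `∑ c, klU (2⁻ⁿ 1_{b = c})` is the entropy of the bit `b (X^n)`, hence at most `log 2`.

Since `noisyPMF n α b c` is the noise operator `T` applied to `2⁻ⁿ 1_{b = c}`, summing over `c` gives
`n / 4 - M ≤ (1 - 2 α)^2 log 2 / 2`.

Everything is proved by splitting off the first coordinate: `smse`, `klU` and the noise operator all
satisfy a recursion in `n`, which reduces the first two facts to inequalities for the two-point
divergence `d2`. With `s` the relative difference of the two masses, `d2` is
`(m / 2) ψ(s)` where `ψ(s) = (1 + s) log (1 + s) + (1 - s) log (1 - s)`, and what is needed is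
`s² ≤ ψ(s)` and `ψ(ρ s) ≤ ρ² ψ(s)` for `ρ ∈ [0, 1]`. The data processing step also uses that `klU` is
subadditive, an instance of the log-sum inequality.
-/

open Finset MeasureTheory

noncomputable section

/-- Conditional probability that coordinate `k` equals `true` given the coordinates
before `k`, under the (possibly unnormalized) pmf `μ` on `{0,1}^n`. -/
def condQ {n : ℕ} (μ : (Fin n → Bool) → ℝ) (k : Fin n) (x : Fin n → Bool) : ℝ :=
  (∑ y ∈ Finset.univ.filter
      (fun y : Fin n → Bool => (∀ i : Fin n, i < k → y i = x i) ∧ y k = true), μ y) /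
  (∑ y ∈ Finset.univ.filter
      (fun y : Fin n → Bool => ∀ i : Fin n, i < k → y i = x i), μ y)

/-- The `k`-th term `E[Q_k (1 - Q_k)]` of the sequential mean squared error. -/
def smseTerm {n : ℕ} (μ : (Fin n → Bool) → ℝ) (k : Fin n) : ℝ :=
  ∑ x : Fin n → Bool, μ x * (condQ μ k x * (1 - condQ μ k x))

/-- The sequential mean squared error `M(U^n) = Σ_k E[Q_k (1 - Q_k)]`. -/
def smse {n : ℕ} (μ : (Fin n → Bool) → ℝ) : ℝ := ∑ k : Fin n, smseTerm μ k

/-- The uniform pmf on `{0,1}^n`. -/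
def unif (n : ℕ) : (Fin n → Bool) → ℝ := fun _ => ((2 : ℝ) ^ n)⁻¹

/-- The SMSE of `μ` given the side information `b` :
`M(X^n | b(X^n)) = Σ_c Σ_k E[Q_k (1-Q_k)]` where `Q_k = P[X_k = 1 | X^{k-1}, b(X^n)]`. -/
def condSMSE {n : ℕ} (μ : (Fin n → Bool) → ℝ) (b : (Fin n → Bool) → Bool) : ℝ :=
  ∑ c : Bool, smse (fun x => if b x = c then μ x else 0)

/-- Hamming weight. -/
def hw {n : ℕ} (x : Fin n → Bool) : ℕ := (Finset.univ.filter (fun i => x i = true)).card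

/-- The majority function: `1` iff the Hamming weight exceeds `n/2`. -/
def majF (n : ℕ) : (Fin n → Bool) → Bool := fun x => decide (n < 2 * hw x)

/-- The joint pmf `y ↦ P[Y^n = y, b(X^n) = c]` where `X^n` is uniform and
`Y^n = X^n ⊕ Z^n` with `Z^n` i.i.d. Bernoulli(α). -/
def noisyPMF (n : ℕ) (α : ℝ) (b : (Fin n → Bool) → Bool) (c : Bool) :
    (Fin n → Bool) → ℝ :=
  fun y => ∑ x : Fin n → Bool,
    if b x = c then ((2 : ℝ) ^ n)⁻¹ * ∏ i : Fin n, (if y i = x i then 1 - α else α) else 0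

/-- The noisy SMSE `M(Y^n | b(X^n))`. -/
def noisySMSE (n : ℕ) (α : ℝ) (b : (Fin n → Bool) → Bool) : ℝ :=
  ∑ c : Bool, smse (noisyPMF n α b c)

/-- The binary entropy function (base 2). -/
def binEnt (p : ℝ) : ℝ := -(p * Real.logb 2 p) - (1 - p) * Real.logb 2 (1 - p)

/-- `μ(α) = h(arccos(1-2α)/π)`. -/
def muF (α : ℝ) : ℝ := binEnt (Real.arccos (1 - 2 * α) / Real.pi)

/-- Base-2 Shannon entropy of a pmf on a finite type. -/
def entropy {β : Type*} [Fintype β] (p : β → ℝ) : ℝ := ∑ x : β, -(p x * Real.logb 2 (p x))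

open scoped Classical in
/-- Pushforward pmf along `f`. -/
def push {β γ : Type*} [Fintype β] (μ : β → ℝ) (f : β → γ) : γ → ℝ :=
  fun c => ∑ x ∈ Finset.univ.filter (fun x => f x = c), μ x

/-- The pmf of a majority random vector: uniform on `{v : w(v) > n/2}`. -/
def majPMF (n : ℕ) : (Fin n → Bool) → ℝ :=
  fun v => if n < 2 * hw v then
    (((Finset.univ.filter (fun u : Fin n → Bool => n < 2 * hw u)).card : ℝ))⁻¹ else 0

/-- Standard Gaussian density. -/
def stdPdf (t : ℝ) : ℝ := Real.exp (-(t ^ 2) / 2) / Real.sqrt (2 * Real.pi)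

/-- Gaussian tail function `Q(u) = P[G > u]`. -/
def gaussQ (u : ℝ) : ℝ := ∫ s in Set.Ioi u, stdPdf s

/-- Base-2 conditional Shannon entropy `H(C | Y)` for the joint pmf `J`. -/
def condEntBool {β : Type*} [Fintype β] (J : β → Bool → ℝ) : ℝ :=
  ∑ y : β, ∑ c : Bool, -(J y c * Real.logb 2 (J y c / (∑ c' : Bool, J y c')))

end

/-! ### Two-point inequalities -/

/-- Twice the relative entropy of the Bernoulli law `((1 + s)/2, (1 - s)/2)` with respect to
the fair coin. -/
noncomputable def psi (s : ℝ) : ℝ := (1 + s) * Real.log (1 + s) + (1 - s) * Real.log (1 - s)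

lemma psi_continuous : Continuous psi := by
  unfold psi
  exact (Real.continuous_mul_log.comp (continuous_const.add continuous_id)).add
    (Real.continuous_mul_log.comp (continuous_const.sub continuous_id))

lemma psi_neg (s : ℝ) : psi (-s) = psi s := by
  unfold psi
  rw [sub_neg_eq_add, ← sub_eq_add_neg]
  ring

lemma psi_abs (s : ℝ) : psi |s| = psi s := by
  rcases abs_choice s with h | h <;> rw [h]
  exact psi_neg s

/-- The derivative of `psi`. -/
noncomputable def psiD (s : ℝ) : ℝ := Real.log (1 + s) - Real.log (1 - s)

lemma psi_hasDerivAt {s : ℝ} (h0 : -1 < s) (h1 : s < 1) : HasDerivAt psi (psiD s) s := by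
  have a := (Real.hasDerivAt_mul_log (x := 1 + s) (by linarith)).comp s
    ((hasDerivAt_id s).const_add 1)
  have c := (Real.hasDerivAt_mul_log (x := 1 - s) (by linarith)).comp s
    ((hasDerivAt_id s).const_sub 1)
  refine (a.add c).congr_deriv ?_
  unfold psiD
  ring

lemma psiD_hasDerivAt {s : ℝ} (h0 : -1 < s) (h1 : s < 1) :
    HasDerivAt psiD (2 / (1 - s ^ 2)) s := by
  have a := (Real.hasDerivAt_log (x := 1 + s) (by linarith)).comp s
    ((hasDerivAt_id s).const_add 1)
  have c := (Real.hasDerivAt_log (x := 1 - s) (by linarith)).comp s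
    ((hasDerivAt_id s).const_sub 1)
  refine (a.sub c).congr_deriv ?_
  have h2 : 1 + s ≠ 0 := by linarith
  have h3 : 1 - s ≠ 0 := by linarith
  have h4 : 1 - s ^ 2 ≠ 0 := by
    have : 1 - s ^ 2 = (1 + s) * (1 - s) := by ring
    rw [this]; exact mul_ne_zero h2 h3
  field_simp
  ring

/-- A function vanishing at `0` with nonnegative derivative on `(0, r)` is nonnegative on
`[0, r]`. -/
lemma nonneg_of_deriv {f f' : ℝ → ℝ} {r : ℝ} (hc : ContinuousOn f (Set.Icc 0 r)) (hf : f 0 = 0)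
    (hd : ∀ x, 0 < x → x < r → HasDerivAt f (f' x) x)
    (hp : ∀ x, 0 < x → x < r → 0 ≤ f' x) {s : ℝ} (h0 : 0 ≤ s) (h1 : s ≤ r) : 0 ≤ f s := by
  have hm : MonotoneOn f (Set.Icc 0 r) := by
    apply monotoneOn_of_deriv_nonneg (convex_Icc 0 r) hc
    · intro x hx
      rw [interior_Icc] at hx
      exact (hd x hx.1 hx.2).differentiableAt.differentiableWithinAt
    · intro x hx
      rw [interior_Icc] at hx
      rw [(hd x hx.1 hx.2).deriv]
      exact hp x hx.1 hx.2
  rw [← hf]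
  exact hm ⟨le_refl _, h0.trans h1⟩ ⟨h0, h1⟩ h0

lemma two_mul_le_psiD {s : ℝ} (h0 : 0 ≤ s) (h1 : s < 1) : 2 * s ≤ psiD s := by
  have key : ∀ x, 0 ≤ x → x ≤ s →
      HasDerivAt (fun s => psiD s - 2 * s) (2 / (1 - x ^ 2) - 2 * 1) x := fun x hx hxs =>
    (psiD_hasDerivAt (by linarith) (by linarith)).sub ((hasDerivAt_id x).const_mul 2)
  have := nonneg_of_deriv (f := fun s => psiD s - 2 * s) (r := s)
    (fun x hx => (key x hx.1 hx.2).continuousAt.continuousWithinAt) (by simp [psiD])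
    (fun x hx hxs => key x hx.le hxs.le) (fun x hx hxs => by
      have : 0 < 1 - x ^ 2 := by nlinarith
      rw [sub_nonneg, le_div_iff₀ this]
      nlinarith) h0 le_rfl
  simpa using this

/-- Pinsker's inequality for a binary law. -/
lemma sq_le_psi {s : ℝ} (h : |s| ≤ 1) : s ^ 2 ≤ psi s := by
  rw [← psi_abs, ← sq_abs]
  have := nonneg_of_deriv (f := fun s => psi s - s ^ 2) (f' := fun x => psiD x - 2 * x) (r := 1)
    (psi_continuous.sub (continuous_pow 2)).continuousOn (by simp [psi])
    (fun x hx hx1 => by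
      refine ((psi_hasDerivAt (by linarith) hx1).sub (hasDerivAt_pow 2 x)).congr_deriv ?_
      simp)
    (fun x hx hx1 => by have := two_mul_le_psiD hx.le hx1; linarith) (abs_nonneg s) h
  simpa using this

lemma psiD_mul_le {r s : ℝ} (hr0 : 0 ≤ r) (hr1 : r ≤ 1) (h0 : 0 ≤ s) (h1 : s < 1) :
    psiD (r * s) ≤ r * psiD s := by
  have key : ∀ x, 0 ≤ x → x ≤ s → HasDerivAt (fun s => r * psiD s - psiD (r * s))
      (r * (2 / (1 - x ^ 2)) - 2 / (1 - (r * x) ^ 2) * (r * 1)) x := fun x hx hxs =>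
    ((psiD_hasDerivAt (by linarith) (by linarith)).const_mul r).sub
      ((psiD_hasDerivAt (s := r * x) (by nlinarith) (by nlinarith)).comp x
        ((hasDerivAt_id x).const_mul r))
  have := nonneg_of_deriv (f := fun s => r * psiD s - psiD (r * s)) (r := s)
    (fun x hx => (key x hx.1 hx.2).continuousAt.continuousWithinAt) (by simp [psiD])
    (fun x hx hxs => key x hx.le hxs.le) (fun x hx hxs => by
      have hp : 0 < 1 - x ^ 2 := by nlinarith
      have hle : 1 - x ^ 2 ≤ 1 - (r * x) ^ 2 := by
        have : (r * x) ^ 2 ≤ x ^ 2 := by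
          apply pow_le_pow_left₀ (by positivity)
          nlinarith
        linarith
      have := div_le_div_of_nonneg_left (by norm_num : (0 : ℝ) ≤ 2) hp hle
      nlinarith) h0 le_rfl
  simpa using this

/-- The strong data processing inequality for a single use of the binary symmetric channel,
in terms of `psi`. -/
lemma psi_mul_le {r s : ℝ} (hr0 : 0 ≤ r) (hr1 : r ≤ 1) (h : |s| ≤ 1) :
    psi (r * s) ≤ r ^ 2 * psi s := by
  rw [← psi_abs, ← psi_abs s, abs_mul, abs_of_nonneg hr0]
  have := nonneg_of_deriv (f := fun s => r ^ 2 * psi s - psi (r * s))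
    (f' := fun x => r ^ 2 * psiD x - psiD (r * x) * (r * 1)) (r := 1)
    ((continuous_const.mul psi_continuous).sub
      (psi_continuous.comp (continuous_const.mul continuous_id))).continuousOn (by simp [psi])
    (fun x hx hx1 =>
      ((psi_hasDerivAt (by linarith) hx1).const_mul (r ^ 2)).sub
        ((psi_hasDerivAt (s := r * x) (by nlinarith) (by nlinarith)).comp x
          ((hasDerivAt_id x).const_mul r)))
    (fun x hx hx1 => by
      have := mul_le_mul_of_nonneg_left (psiD_mul_le hr0 hr1 hx.le hx1) hr0
      nlinarith) (abs_nonneg s) h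
  simpa using this

/-- The unnormalized relative entropy of the weights `(a, b)` with respect to
`((a + b)/2, (a + b)/2)`. -/
noncomputable def d2 (a b : ℝ) : ℝ :=
  a * Real.log a + b * Real.log b - (a + b) * Real.log (a + b) + (a + b) * Real.log 2

lemma mul_log_scale {m t : ℝ} (hm : 0 < m) :
    m * t / 2 * Real.log (m * t / 2) =
      m / 2 * (t * Real.log t) + m * t / 2 * (Real.log m - Real.log 2) := by
  by_cases ht : t = 0
  · simp [ht]
  rw [Real.log_div (mul_ne_zero hm.ne' ht) two_ne_zero, Real.log_mul hm.ne' ht]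
  ring

lemma d2_eq_psi {m s : ℝ} (hm : 0 < m) :
    d2 (m * (1 + s) / 2) (m * (1 - s) / 2) = m / 2 * psi s := by
  have hs : m * (1 + s) / 2 + m * (1 - s) / 2 = m := by ring
  unfold d2 psi
  rw [hs, mul_log_scale hm, mul_log_scale hm]
  ring

/-- Two nonnegative weights of positive sum, in terms of their sum and relative difference. -/
lemma exists_param {a b : ℝ} (ha : 0 ≤ a) (hb : 0 ≤ b) (h : 0 < a + b) :
    ∃ m s : ℝ, 0 < m ∧ |s| ≤ 1 ∧ a = m * (1 + s) / 2 ∧ b = m * (1 - s) / 2 := by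
  refine ⟨a + b, (a - b) / (a + b), h, ?_, ?_, ?_⟩
  · rw [abs_div, abs_of_pos h, div_le_one h, abs_le]
    constructor <;> linarith
  · field_simp; ring
  · field_simp; ring

lemma d2_pinsker {a b : ℝ} (ha : 0 ≤ a) (hb : 0 ≤ b) :
    (a + b) / 4 - a * b / (a + b) ≤ d2 a b / 2 := by
  rcases (add_nonneg ha hb).eq_or_lt with h | h
  · have ha' : a = 0 := by linarith
    have hb' : b = 0 := by linarith
    simp [ha', hb', d2]
  obtain ⟨m, s, hm, hs, rfl, rfl⟩ := exists_param ha hb h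
  rw [d2_eq_psi hm]
  have hsum : m * (1 + s) / 2 + m * (1 - s) / 2 = m := by ring
  have : m * (1 + s) / 2 * (m * (1 - s) / 2) / m = m * (1 - s ^ 2) / 4 := by
    field_simp; ring
  rw [hsum, this]
  nlinarith [mul_le_mul_of_nonneg_left (sq_le_psi hs) hm.le]

lemma d2_contract {a b α : ℝ} (ha : 0 ≤ a) (hb : 0 ≤ b) (hα0 : 0 ≤ α) (hα1 : α ≤ 1 / 2) :
    d2 ((1 - α) * a + α * b) (α * a + (1 - α) * b) ≤ (1 - 2 * α) ^ 2 * d2 a b := by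
  rcases (add_nonneg ha hb).eq_or_lt with h | h
  · have ha' : a = 0 := by linarith
    have hb' : b = 0 := by linarith
    simp [ha', hb', d2]
  obtain ⟨m, s, hm, hs, rfl, rfl⟩ := exists_param ha hb h
  have e1 : (1 - α) * (m * (1 + s) / 2) + α * (m * (1 - s) / 2) =
      m * (1 + (1 - 2 * α) * s) / 2 := by ring
  have e2 : α * (m * (1 + s) / 2) + (1 - α) * (m * (1 - s) / 2) =
      m * (1 - (1 - 2 * α) * s) / 2 := by ring
  rw [e1, e2, d2_eq_psi hm, d2_eq_psi hm]
  have := psi_mul_le (r := 1 - 2 * α) (by linarith) (by linarith) hs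
  nlinarith

/-- The log-sum inequality for two terms. -/
lemma log_sum {x y m k : ℝ} (hx : 0 ≤ x) (hy : 0 ≤ y) (hxm : x ≤ m) (hyk : y ≤ k) :
    (x + y) * Real.log ((x + y) / (m + k)) ≤ x * Real.log (x / m) + y * Real.log (y / k) := by
  rcases (hx.trans hxm).eq_or_lt with h | hm
  · have : x = 0 := by linarith
    simp [this, ← h]
  rcases (hy.trans hyk).eq_or_lt with h | hk
  · have : y = 0 := by linarith
    simp [this, ← h]
  have hmk : 0 < m + k := add_pos hm hk
  have := Real.convexOn_mul_log.2
    (show x / m ∈ Set.Ici 0 from div_nonneg hx hm.le)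
    (show y / k ∈ Set.Ici 0 from div_nonneg hy hk.le)
    (show 0 ≤ m / (m + k) by positivity) (show 0 ≤ k / (m + k) by positivity) (by field_simp)
  simp only [smul_eq_mul] at this
  have e : m / (m + k) * (x / m) + k / (m + k) * (y / k) = (x + y) / (m + k) := by
    field_simp
  rw [e] at this
  have h2 := mul_le_mul_of_nonneg_left this hmk.le
  have e1 : (m + k) * ((x + y) / (m + k) * Real.log ((x + y) / (m + k))) =
      (x + y) * Real.log ((x + y) / (m + k)) := by field_simp
  have e2 : (m + k) * (m / (m + k) * (x / m * Real.log (x / m)) +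
      k / (m + k) * (y / k * Real.log (y / k))) =
      x * Real.log (x / m) + y * Real.log (y / k) := by field_simp
  rwa [e1, e2] at h2

lemma mul_log_div {x m : ℝ} (hx : 0 ≤ x) (hxm : x ≤ m) :
    x * Real.log (x / m) = x * Real.log x - x * Real.log m := by
  rcases hx.eq_or_lt with h | h
  · simp [← h]
  · rw [Real.log_div h.ne' (by linarith)]
    ring

lemma d2_eq_log_div {a b : ℝ} (ha : 0 ≤ a) (hb : 0 ≤ b) :
    d2 a b = a * Real.log (a / (a + b)) + b * Real.log (b / (a + b)) + (a + b) * Real.log 2 := by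
  rw [mul_log_div ha (by linarith), mul_log_div hb (by linarith)]
  unfold d2
  ring

lemma d2_add_le {a b a' b' : ℝ} (ha : 0 ≤ a) (hb : 0 ≤ b) (ha' : 0 ≤ a') (hb' : 0 ≤ b') :
    d2 (a + a') (b + b') ≤ d2 a b + d2 a' b' := by
  rw [d2_eq_log_div ha hb, d2_eq_log_div ha' hb',
    d2_eq_log_div (add_nonneg ha ha') (add_nonneg hb hb'), add_add_add_comm a a' b b']
  have h1 := log_sum ha ha' (show a ≤ a + b by linarith) (show a' ≤ a' + b' by linarith)
  have h2 := log_sum hb hb' (show b ≤ a + b by linarith) (show b' ≤ a' + b' by linarith)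
  linarith

lemma d2_smul {c : ℝ} (hc : 0 ≤ c) (a b : ℝ) (ha : 0 ≤ a) (hb : 0 ≤ b) :
    d2 (c * a) (c * b) = c * d2 a b := by
  rcases hc.eq_or_lt with h | h
  · simp [← h, d2]
  · rw [d2_eq_log_div ha hb, d2_eq_log_div (by positivity) (by positivity), ← mul_add,
      mul_div_mul_left _ _ h.ne', mul_div_mul_left _ _ h.ne']
    ring

/-! ### Splitting off the first coordinate -/

lemma sum_cube_succ {n : ℕ} (F : (Fin (n + 1) → Bool) → ℝ) :
    ∑ x, F x = ∑ c : Bool, ∑ x : Fin n → Bool, F (Fin.cons c x) := by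
  rw [← (Fin.consEquiv (fun _ : Fin (n + 1) => Bool)).sum_comp, Fintype.sum_prod_type]
  rfl

/-- The weight obtained from `f` by fixing the first coordinate to `c`. -/
def cubeSlice {n : ℕ} (f : (Fin (n + 1) → Bool) → ℝ) (c : Bool) : (Fin n → Bool) → ℝ :=
  fun x => f (Fin.cons c x)

lemma condQ_zero {n : ℕ} (f : (Fin (n + 1) → Bool) → ℝ) (x : Fin (n + 1) → Bool) :
    condQ f 0 x = (∑ y, cubeSlice f true y) / (∑ y, cubeSlice f true y + ∑ y, cubeSlice f false y) := by
  unfold condQ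
  rw [Finset.sum_filter, Finset.sum_filter, sum_cube_succ, sum_cube_succ]
  simp [cubeSlice]

lemma condQ_succ {n : ℕ} (f : (Fin (n + 1) → Bool) → ℝ) (k : Fin n) (c : Bool)
    (x : Fin n → Bool) :
    condQ f k.succ (Fin.cons c x) = condQ (cubeSlice f c) k x := by
  unfold condQ
  simp only [Finset.sum_filter]
  rw [sum_cube_succ, sum_cube_succ]
  cases c <;> simp [cubeSlice, Fin.forall_fin_succ]

lemma smse_succ {n : ℕ} (f : (Fin (n + 1) → Bool) → ℝ) :
    smse f = (∑ x, cubeSlice f true x) * (∑ x, cubeSlice f false x) /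
        (∑ x, cubeSlice f true x + ∑ x, cubeSlice f false x)
      + (smse (cubeSlice f true) + smse (cubeSlice f false)) := by
  unfold smse
  rw [Fin.sum_univ_succ]
  congr 1
  · unfold smseTerm
    simp only [condQ_zero]
    rw [← Finset.sum_mul, sum_cube_succ, Fintype.sum_bool]
    change (∑ x, cubeSlice f true x + ∑ x, cubeSlice f false x) * _ = _
    by_cases h : ∑ x, cubeSlice f true x + ∑ x, cubeSlice f false x = 0
    · simp [h]
    · field_simp
      ring
  · rw [← Finset.sum_add_distrib]
    refine Finset.sum_congr rfl fun k _ => ?_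
    unfold smseTerm
    rw [sum_cube_succ, Fintype.sum_bool]
    simp only [condQ_succ]
    rfl

/-- The unnormalized relative entropy (in nats) of the weight `f` with respect to the uniform
weight on the cube of the same total mass. -/
noncomputable def klU {n : ℕ} (f : (Fin n → Bool) → ℝ) : ℝ :=
  ∑ x, f x * Real.log (f x) - (∑ x, f x) * Real.log (∑ x, f x) + (∑ x, f x) * (n * Real.log 2)

/-- The chain rule for relative entropy. -/
lemma klU_succ {n : ℕ} (f : (Fin (n + 1) → Bool) → ℝ) :
    klU f = d2 (∑ x, cubeSlice f true x) (∑ x, cubeSlice f false x)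
      + (klU (cubeSlice f true) + klU (cubeSlice f false)) := by
  unfold klU d2
  simp only [sum_cube_succ, Fintype.sum_bool, cubeSlice]
  push_cast
  ring

lemma klU_zero_dim (f : (Fin 0 → Bool) → ℝ) : klU f = 0 := by
  simp [klU]

lemma slice_nonneg {n : ℕ} {f : (Fin (n + 1) → Bool) → ℝ} (hf : ∀ x, 0 ≤ f x) (c : Bool) :
    ∀ x, 0 ≤ cubeSlice f c x := fun _ => hf _

/-- The chain rule combined with Pinsker's inequality for each coordinate. -/
lemma smse_ge : ∀ {n : ℕ} (f : (Fin n → Bool) → ℝ), (∀ x, 0 ≤ f x) →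
    (∑ x, f x) * n / 4 - klU f / 2 ≤ smse f
  | 0, f, _ => by simp [klU_zero_dim, smse]
  | n + 1, f, hf => by
    have h1 := smse_ge (cubeSlice f true) (slice_nonneg hf _)
    have h2 := smse_ge (cubeSlice f false) (slice_nonneg hf _)
    have h3 := d2_pinsker (Finset.sum_nonneg fun x (_ : x ∈ Finset.univ) => slice_nonneg hf true x)
      (Finset.sum_nonneg fun x (_ : x ∈ Finset.univ) => slice_nonneg hf false x)
    have e : ∑ x, f x = ∑ x, cubeSlice f true x + ∑ x, cubeSlice f false x := by
      rw [sum_cube_succ, Fintype.sum_bool]; rfl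
    rw [smse_succ, klU_succ, e]
    push_cast
    linarith

lemma klU_add_le : ∀ {n : ℕ} (f g : (Fin n → Bool) → ℝ), (∀ x, 0 ≤ f x) → (∀ x, 0 ≤ g x) →
    klU (fun x => f x + g x) ≤ klU f + klU g
  | 0, f, g, _, _ => by simp [klU_zero_dim]
  | n + 1, f, g, hf, hg => by
    have h1 := klU_add_le (cubeSlice f true) (cubeSlice g true) (slice_nonneg hf _) (slice_nonneg hg _)
    have h2 := klU_add_le (cubeSlice f false) (cubeSlice g false) (slice_nonneg hf _) (slice_nonneg hg _)
    have hs : ∀ c, cubeSlice (fun x => f x + g x) c = fun x => cubeSlice f c x + cubeSlice g c x :=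
      fun _ => rfl
    have hn : ∀ (h : (Fin (n + 1) → Bool) → ℝ) (_ : ∀ x, 0 ≤ h x) (c : Bool),
      0 ≤ ∑ x, cubeSlice h c x := fun h hh c => Finset.sum_nonneg fun x _ => slice_nonneg hh c x
    rw [klU_succ, klU_succ f, klU_succ g, hs, hs, Finset.sum_add_distrib, Finset.sum_add_distrib]
    have h3 := d2_add_le (hn f hf true) (hn f hf false) (hn g hg true) (hn g hg false)
    linarith

lemma klU_smul : ∀ {n : ℕ} {c : ℝ} (_ : 0 ≤ c) (f : (Fin n → Bool) → ℝ), (∀ x, 0 ≤ f x) →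
    klU (fun x => c * f x) = c * klU f
  | 0, c, _, f, _ => by simp [klU_zero_dim]
  | n + 1, c, hc, f, hf => by
    have h1 := klU_smul hc (cubeSlice f true) (slice_nonneg hf _)
    have h2 := klU_smul hc (cubeSlice f false) (slice_nonneg hf _)
    have hs : ∀ e, cubeSlice (fun x => c * f x) e = fun x => c * cubeSlice f e x :=
      fun _ => rfl
    rw [klU_succ, klU_succ f, hs, hs, h1, h2, ← Finset.mul_sum, ← Finset.mul_sum,
      d2_smul hc _ _ (Finset.sum_nonneg fun x _ => slice_nonneg hf _ x)
        (Finset.sum_nonneg fun x _ => slice_nonneg hf _ x)]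
    ring

/-! ### The noise operator -/

/-- The output weight of `n` uses of the binary symmetric channel with crossover probability `α`
on the input weight `f`. -/
noncomputable def noise {n : ℕ} (α : ℝ) (f : (Fin n → Bool) → ℝ) : (Fin n → Bool) → ℝ :=
  fun y => ∑ x, f x * ∏ i : Fin n, (if y i = x i then 1 - α else α)

lemma noise_nonneg {n : ℕ} {α : ℝ} (hα0 : 0 ≤ α) (hα1 : α ≤ 1 / 2) {f : (Fin n → Bool) → ℝ}
    (hf : ∀ x, 0 ≤ f x) (y : Fin n → Bool) : 0 ≤ noise α f y := by
  refine Finset.sum_nonneg fun x _ => mul_nonneg (hf x) (Finset.prod_nonneg fun i _ => ?_)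
  split_ifs <;> linarith

lemma slice_noise_true {n : ℕ} (α : ℝ) (f : (Fin (n + 1) → Bool) → ℝ) :
    cubeSlice (noise α f) true =
      fun y => (1 - α) * noise α (cubeSlice f true) y + α * noise α (cubeSlice f false) y := by
  funext y
  simp only [cubeSlice, noise]
  rw [sum_cube_succ, Fintype.sum_bool, Finset.mul_sum, Finset.mul_sum]
  congr 1 <;> refine Finset.sum_congr rfl fun x _ => ?_ <;>
    simp [Fin.prod_univ_succ, mul_left_comm]

lemma slice_noise_false {n : ℕ} (α : ℝ) (f : (Fin (n + 1) → Bool) → ℝ) :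
    cubeSlice (noise α f) false =
      fun y => α * noise α (cubeSlice f true) y + (1 - α) * noise α (cubeSlice f false) y := by
  funext y
  simp only [cubeSlice, noise]
  rw [sum_cube_succ, Fintype.sum_bool, Finset.mul_sum, Finset.mul_sum]
  congr 1 <;> refine Finset.sum_congr rfl fun x _ => ?_ <;>
    simp [Fin.prod_univ_succ, mul_left_comm]

lemma sum_noise : ∀ {n : ℕ} (α : ℝ) (f : (Fin n → Bool) → ℝ), ∑ y, noise α f y = ∑ x, f x
  | 0, α, f => by simp [noise]
  | n + 1, α, f => by
    have h1 := sum_noise α (cubeSlice f true)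
    have h2 := sum_noise α (cubeSlice f false)
    have e : ∀ g : (Fin (n + 1) → Bool) → ℝ,
        ∑ x, g x = ∑ x, cubeSlice g true x + ∑ x, cubeSlice g false x := fun g => by
      rw [sum_cube_succ, Fintype.sum_bool]; rfl
    rw [e, e f, slice_noise_true, slice_noise_false, Finset.sum_add_distrib,
      Finset.sum_add_distrib, ← Finset.mul_sum, ← Finset.mul_sum, ← Finset.mul_sum,
      ← Finset.mul_sum, h1, h2]
    ring

/-- The strong data processing inequality for the binary symmetric channel with uniform
reference measure. By the chain rule, the first coordinate contributes the two-point
contraction `d2_contract`. The remaining coordinates contribute the inductive bound, applied after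
subadditivity has removed the mixing of the two slices. -/
lemma klU_noise_le {α : ℝ} (hα0 : 0 ≤ α) (hα1 : α ≤ 1 / 2) : ∀ {n : ℕ} (f : (Fin n → Bool) → ℝ),
    (∀ x, 0 ≤ f x) → klU (noise α f) ≤ (1 - 2 * α) ^ 2 * klU f
  | 0, f, _ => by simp [klU_zero_dim]
  | n + 1, f, hf => by
    have h1 := klU_noise_le hα0 hα1 (cubeSlice f true) (slice_nonneg hf _)
    have h2 := klU_noise_le hα0 hα1 (cubeSlice f false) (slice_nonneg hf _)
    have hα' : 0 ≤ 1 - α := by linarith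
    have n1 := noise_nonneg hα0 hα1 (slice_nonneg hf true)
    have n2 := noise_nonneg hα0 hα1 (slice_nonneg hf false)
    have k : ∀ {p q : ℝ}, 0 ≤ p → 0 ≤ q →
        klU (fun y => p * noise α (cubeSlice f true) y + q * noise α (cubeSlice f false) y) ≤
          p * klU (noise α (cubeSlice f true)) + q * klU (noise α (cubeSlice f false)) := by
      intro p q hp hq
      rw [← klU_smul hp _ n1, ← klU_smul hq _ n2]
      exact klU_add_le _ _ (fun x => mul_nonneg hp (n1 x)) (fun x => mul_nonneg hq (n2 x))
    have k1 := k hα' hα0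
    have k2 := k hα0 hα'
    have h3 := d2_contract
      (Finset.sum_nonneg fun x (_ : x ∈ Finset.univ) => slice_nonneg hf true x)
      (Finset.sum_nonneg fun x (_ : x ∈ Finset.univ) => slice_nonneg hf false x) hα0 hα1
    rw [klU_succ, klU_succ f, slice_noise_true, slice_noise_false]
    simp only [Finset.sum_add_distrib, ← Finset.mul_sum, sum_noise]
    linarith

/-! ### The side information -/

/-- The joint weight `x ↦ P[X^n = x, b(X^n) = c]`. -/
noncomputable def source (n : ℕ) (b : (Fin n → Bool) → Bool) (c : Bool) : (Fin n → Bool) → ℝ :=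
  fun x => if b x = c then ((2 : ℝ) ^ n)⁻¹ else 0

lemma source_nonneg {n : ℕ} (b : (Fin n → Bool) → Bool) (c : Bool) (x : Fin n → Bool) :
    0 ≤ source n b c x := by
  unfold source
  split_ifs <;> positivity

lemma noisyPMF_eq (n : ℕ) (α : ℝ) (b : (Fin n → Bool) → Bool) (c : Bool) :
    noisyPMF n α b c = noise α (source n b c) := by
  funext y
  simp only [noisyPMF, noise, source, ite_mul, zero_mul]

lemma klU_source (n : ℕ) (b : (Fin n → Bool) → Bool) (c : Bool) :
    klU (source n b c) = Real.negMulLog (∑ x, source n b c x) := by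
  have h : ∀ x, source n b c x * Real.log (source n b c x) =
      source n b c x * (-(n * Real.log 2)) := by
    intro x
    unfold source
    split_ifs
    · rw [Real.log_inv, Real.log_pow]
    · simp
  unfold klU Real.negMulLog
  rw [Finset.sum_congr rfl fun x _ => h x, ← Finset.sum_mul]
  ring

lemma sum_source (n : ℕ) (b : (Fin n → Bool) → Bool) :
    ∑ x, source n b true x + ∑ x, source n b false x = 1 := by
  rw [← Finset.sum_add_distrib]
  have : ∀ x, source n b true x + source n b false x = ((2 : ℝ) ^ n)⁻¹ := by
    intro x
    cases h : b x <;> simp [source, h]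
  simp [this]

theorem stmt3 (n : ℕ) (hn : 0 < n) (α : ℝ) (hα0 : 0 ≤ α) (hα1 : α ≤ 1/2)
    (b : (Fin n → Bool) → Bool) :
    noisySMSE n α b ≥ ((n : ℝ) - 2 * Real.log 2 * (1 - 2*α)^2) / 4 := by
  have key : ∀ c, (∑ x, source n b c x) * n / 4
      - (1 - 2 * α) ^ 2 * Real.negMulLog (∑ x, source n b c x) / 2 ≤ smse (noisyPMF n α b c) := by
    intro c
    have h1 := smse_ge _ (noise_nonneg hα0 hα1 (source_nonneg b c))
    have h2 := klU_noise_le hα0 hα1 _ (source_nonneg b c)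
    rw [sum_noise] at h1
    rw [klU_source] at h2
    rw [noisyPMF_eq]
    linarith
  have hsum := sum_source n b
  have hent : Real.negMulLog (∑ x, source n b true x) + Real.negMulLog (∑ x, source n b false x)
      ≤ Real.log 2 := by
    rw [eq_sub_of_add_eq' hsum, ← Real.binEntropy_eq_negMulLog_add_negMulLog_one_sub]
    exact Real.binEntropy_le_log_two
  have ht := key true
  have hf := key false
  have hm := mul_le_mul_of_nonneg_left hent (sq_nonneg (1 - 2 * α))
  have hN : (∑ x, source n b true x) * n + (∑ x, source n b false x) * n = (n : ℝ) := by
    rw [← add_mul, hsum, one_mul]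
  unfold noisySMSE
  rw [Fintype.sum_bool]
  linarith
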